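/- For every integer γ ≥ 2, the graph C*_{3,3γ−5} of order n = 3γ − 1 is a connected nonbipartite graph whose domination number equals γ; in particular the bound n ≥ 3γ − 1 for connected nonbipartite graphs is attained with equality. -/

import Mathlib

open scoped Classical

/-- `D` is a dominating set of `G`: every vertex not in `D` is adjacent to a vertex of `D`. -/
def IsDominatingSet {V : Type*} [Fintype V] (G : SimpleGraph V) (D : Finset V) : Prop :=
  ∀ v, v ∉ D → ∃ u ∈ D, G.Adj u v

/-- The domination number of `G`: minimum cardinality of a dominating set. -/
noncomputable def dominationNumber {V : Type*} [Fintype V] (G : SimpleGraph V) : ℕ :=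
  sInf {k | ∃ D : Finset V, IsDominatingSet G D ∧ D.card = k}

/-- Edge relation for the graph `C*_{s,l}` on vertex indices `0, …, n-1`:
vertices `0, …, s-1` form a cycle `C_s` (with `0` playing the role of `v_1`);
vertices `0, s, s+1, …, s+l-1` form a path of length `l` hanging at `0`;
and all remaining vertices `s+l, …, n-1` are pendant vertices attached to the
other end of the path (to `0` itself when `l = 0`). -/
def cstarRel (s l : ℕ) (a b : ℕ) : Prop :=
  (b = a + 1 ∧ a + 1 < s) ∨
  (a = 0 ∧ b = s - 1) ∨
  (1 ≤ l ∧ a = 0 ∧ b = s) ∨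
  (b = a + 1 ∧ s ≤ a ∧ a + 1 < s + l) ∨
  (a = (if l = 0 then 0 else s + l - 1) ∧ s + l ≤ b)

/-- The graph `C*_{s,l}` of order `n`: a cycle `C_s` with a path of length `l`
attached, and `n - s - l` pendant edges attached at the far end of the path. -/
def Cstar (n s l : ℕ) : SimpleGraph (Fin n) :=
  SimpleGraph.fromRel (fun i j => cstarRel s l i.val j.val)

/-!
A set dominates `G` exactly when it meets every closed neighbourhood, so a family of vertices with
pairwise disjoint closed neighbourhoods is at most as large as any dominating set. Suppose that
`C*_{3,l}` has a pendant vertex, and cut the indices into the triples `{3i, 3i + 1, 3i + 2}`, all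
pendant vertices going into the last one: the closed neighbourhood of each middle vertex `3i + 1`
stays inside its own triple. Conversely, every third vertex of the path, starting on the cycle,
together with the last vertex of the path is a dominating set. Both families have `⌈l/3⌉ + 1`
members, which is `γ` when `l = 3γ - 5`.
-/

section Domination

variable {V ι : Type*} {G : SimpleGraph V}

/-- The closed neighbourhood `N[v]`, in terms of which domination (every `N[v]` is met) and packing
(the chosen `N[v]` are disjoint) are dual. -/
def closedNeighborSet (G : SimpleGraph V) (v : V) : Set V :=
  insert v (G.neighborSet v)

/-- A packing of `G`, as an indexed family of vertices whose closed neighbourhoods are pairwise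
disjoint; packings bound the domination number from below. -/
def IsPacking (G : SimpleGraph V) (p : ι → V) : Prop :=
  Pairwise fun i j => Disjoint (closedNeighborSet G (p i)) (closedNeighborSet G (p j))

theorem isPacking_of_forall_mem_closedNeighborSet_eq {p : ι → V} (f : V → ι)
    (hf : ∀ i, ∀ u ∈ closedNeighborSet G (p i), f u = i) : IsPacking G p :=
  fun i j hij => Set.disjoint_left.2 fun u hi hj => hij ((hf i u hi).symm.trans (hf j u hj))

variable [Fintype V]

theorem isDominatingSet_iff {D : Finset V} :
    IsDominatingSet G D ↔ ∀ v, ∃ u ∈ D, u ∈ closedNeighborSet G v := by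
  refine forall_congr' fun v => ⟨fun h => ?_, ?_⟩
  · by_cases hv : v ∈ D
    · exact ⟨v, hv, Or.inl rfl⟩
    · obtain ⟨u, hu, huv⟩ := h hv
      exact ⟨u, hu, Or.inr huv.symm⟩
  · rintro ⟨u, hu, rfl | hvu⟩ hv
    · exact absurd hu hv
    · exact ⟨u, hu, SimpleGraph.Adj.symm hvu⟩

theorem IsDominatingSet.dominationNumber_le {D : Finset V} (hD : IsDominatingSet G D) :
    dominationNumber G ≤ D.card :=
  Nat.sInf_le ⟨D, hD, rfl⟩

theorem exists_isDominatingSet_card_eq_dominationNumber (G : SimpleGraph V) :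
    ∃ D : Finset V, IsDominatingSet G D ∧ D.card = dominationNumber G :=
  have huniv : IsDominatingSet G Finset.univ := fun v hv => absurd (Finset.mem_univ v) hv
  Nat.sInf_mem (s := {k | ∃ D : Finset V, IsDominatingSet G D ∧ D.card = k}) ⟨_, _, huniv, rfl⟩

variable [Fintype ι]

theorem IsPacking.card_le_card_of_isDominatingSet {p : ι → V} (hp : IsPacking G p)
    {D : Finset V} (hD : IsDominatingSet G D) : Fintype.card ι ≤ D.card := by
  choose d hdD hdp using fun i => isDominatingSet_iff.1 hD (p i)
  have hd : Function.Injective d := fun i j hij =>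
    by_contra fun hne => Set.disjoint_left.1 (hp hne) (hdp i) (hij ▸ hdp j)
  exact Finset.card_le_card_of_injOn d (fun i _ => hdD i) hd.injOn

theorem IsPacking.card_le_dominationNumber {p : ι → V} (hp : IsPacking G p) :
    Fintype.card ι ≤ dominationNumber G := by
  obtain ⟨D, hD, hcard⟩ := exists_isDominatingSet_card_eq_dominationNumber G
  exact hcard ▸ hp.card_le_card_of_isDominatingSet hD

theorem dominationNumber_le_card_of_forall_exists_mem_closedNeighborSet (d : ι → V)
    (hd : ∀ v, ∃ i, d i ∈ closedNeighborSet G v) : dominationNumber G ≤ Fintype.card ι := by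
  have hD : IsDominatingSet G (Finset.univ.image d) := isDominatingSet_iff.2 fun v =>
    let ⟨i, hi⟩ := hd v
    ⟨d i, Finset.mem_image_of_mem d (Finset.mem_univ i), hi⟩
  exact hD.dominationNumber_le.trans Finset.card_image_le

end Domination

theorem connected_of_forall_ne_exists_adj_lt {V : Type*} [Preorder V] [WellFoundedLT V]
    {G : SimpleGraph V} (r : V) (h : ∀ v, v ≠ r → ∃ u < v, G.Adj u v) : G.Connected := by
  refine G.connected_iff_exists_forall_reachable.2 ⟨r, fun v => ?_⟩
  induction v using WellFoundedLT.induction with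
  | ind v ih =>
    by_cases hv : v = r
    · exact hv ▸ SimpleGraph.Reachable.rfl
    · obtain ⟨u, huv, hadj⟩ := h v hv
      exact (ih u huv).trans hadj.reachable

/-- The `j`-th vertex, counted from `0`, of the path of `C*_{s,l}` hanging at the cycle; its start
is the cycle vertex `0`, and its remaining vertices are `s, …, s + l - 1`. -/
def pathIndex (s : ℕ) : ℕ → ℕ
  | 0 => 0
  | j + 1 => s + j

-- An `if`-free form of `cstarRel`, which `omega` can read.
theorem cstarRel_iff {s l a b : ℕ} :
    cstarRel s l a b ↔ (b = a + 1 ∧ a + 1 < s) ∨ (a = 0 ∧ b = s - 1) ∨ (1 ≤ l ∧ a = 0 ∧ b = s) ∨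
      (b = a + 1 ∧ s ≤ a ∧ a + 1 < s + l) ∨
      ((l = 0 ∧ a = 0 ∨ 1 ≤ l ∧ a = s + l - 1) ∧ s + l ≤ b) := by
  unfold cstarRel
  split_ifs <;> omega

theorem cstarRel_pathIndex_of_add_le {s l b : ℕ} (hb : s + l ≤ b) :
    cstarRel s l (pathIndex s l) b :=
  have hend : pathIndex s l = if l = 0 then 0 else s + l - 1 := by cases l <;> rfl
  Or.inr (Or.inr (Or.inr (Or.inr ⟨hend, hb⟩)))

theorem exists_lt_cstarRel (s l : ℕ) {b : ℕ} (hb : 0 < b) : ∃ a < b, cstarRel s l a b := by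
  rcases lt_or_ge b (s + l) with hpath | hpendant
  · by_cases hbs : b = s
    · exact ⟨0, hb, cstarRel_iff.2 (by omega)⟩
    · exact ⟨b - 1, by omega, cstarRel_iff.2 (by omega)⟩
  · refine ⟨pathIndex s l, ?_, cstarRel_pathIndex_of_add_le hpendant⟩
    cases l <;> simp only [pathIndex] <;> omega

theorem cstarRel_or_cstarRel_of_val_sub_eq_one {s : ℕ} (l : ℕ) {i j : Fin s}
    (h : (i - j).val = 1) : cstarRel s l i j ∨ cstarRel s l j i := by
  obtain hsucc | hwrap : i.val = j + 1 ∨ i.val = 0 ∧ j.val = s - 1 := by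
    rcases le_or_gt j i with hji | hij
    · have hval := Fin.coe_sub_iff_le.2 hji
      omega
    · have hval := Fin.coe_sub_iff_lt.2 hij
      omega
  · exact Or.inr (Or.inl ⟨hsucc, hsucc ▸ i.isLt⟩)
  · exact Or.inl (Or.inr (Or.inl hwrap))

theorem pathIndex_lt {s l j : ℕ} (hs : 0 < s) (hj : j ≤ l) : pathIndex s j < s + l := by
  cases j <;> simp only [pathIndex] <;> omega

theorem exists_pathIndex_eq {s l b : ℕ} (hsb : s ≤ b) (hb : b < s + l) :
    ∃ j ≤ l, pathIndex s j = b :=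
  ⟨b - s + 1, by omega, by simp only [pathIndex]; omega⟩

theorem cstarRel_pathIndex_succ (s : ℕ) {l j : ℕ} (hj : j < l) :
    cstarRel s l (pathIndex s j) (pathIndex s (j + 1)) := by
  cases j with
  | zero => exact Or.inr (Or.inr (Or.inl ⟨hj, rfl, rfl⟩))
  | succ j => exact Or.inr (Or.inr (Or.inr (Or.inl ⟨rfl, by simp only [pathIndex]; omega⟩)))

theorem exists_pathIndex_min_three_mul_near (s : ℕ) {l j : ℕ} (hj : j ≤ l) :
    ∃ i ≤ (l + 2) / 3, pathIndex s (min (3 * i) l) = pathIndex s j ∨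
      cstarRel s l (pathIndex s j) (pathIndex s (min (3 * i) l)) ∨
      cstarRel s l (pathIndex s (min (3 * i) l)) (pathIndex s j) := by
  refine ⟨(j + 1) / 3, by omega, ?_⟩
  generalize hm : min (3 * ((j + 1) / 3)) l = m
  obtain rfl | rfl | rfl : m = j ∨ m = j + 1 ∨ j = m + 1 := by omega
  · exact Or.inl rfl
  · exact Or.inr (Or.inl (cstarRel_pathIndex_succ s (by omega)))
  · exact Or.inr (Or.inr (cstarRel_pathIndex_succ s hj))

theorem exists_pathIndex_min_three_mul_dominates (l b : ℕ) :
    ∃ i ≤ (l + 2) / 3, pathIndex 3 (min (3 * i) l) = b ∨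
      cstarRel 3 l b (pathIndex 3 (min (3 * i) l)) ∨
      cstarRel 3 l (pathIndex 3 (min (3 * i) l)) b := by
  rcases lt_or_ge b 3 with hcycle | hb
  · refine ⟨0, Nat.zero_le _, ?_⟩
    rw [mul_zero, zero_min, pathIndex, cstarRel_iff, cstarRel_iff]
    omega
  rcases lt_or_ge b (3 + l) with hpath | hpendant
  · obtain ⟨j, hj, rfl⟩ := exists_pathIndex_eq hb hpath
    exact exists_pathIndex_min_three_mul_near 3 hj
  · refine ⟨(l + 2) / 3, le_rfl, Or.inr (Or.inr ?_)⟩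
    rw [min_eq_right (by omega)]
    exact cstarRel_pathIndex_of_add_le hpendant

-- Truncating the quotient at `(l + 2) / 3` puts all pendant vertices into the last triple.
theorem min_div_three_eq_of_cstarRel {l i b : ℕ} (hi : i ≤ (l + 2) / 3)
    (h : b = 3 * i + 1 ∨ cstarRel 3 l (3 * i + 1) b ∨ cstarRel 3 l b (3 * i + 1)) :
    min (b / 3) ((l + 2) / 3) = i := by
  simp only [cstarRel_iff] at h
  omega

namespace Cstar

variable {n s l : ℕ}

theorem adj_iff {u v : Fin n} :
    (Cstar n s l).Adj u v ↔ u ≠ v ∧ (cstarRel s l u v ∨ cstarRel s l v u) :=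
  Iff.rfl

theorem mem_closedNeighborSet_iff {u v : Fin n} :
    u ∈ closedNeighborSet (Cstar n s l) v ↔
      u.val = v ∨ cstarRel s l v u ∨ cstarRel s l u v := by
  simp only [closedNeighborSet, Set.mem_insert_iff, SimpleGraph.mem_neighborSet, adj_iff,
    Fin.ext_iff]
  tauto

theorem connected [NeZero n] : (Cstar n s l).Connected := by
  refine connected_of_forall_ne_exists_adj_lt 0 fun v hv => ?_
  obtain ⟨a, hav, hrel⟩ := exists_lt_cstarRel s l (Fin.pos_iff_ne_zero.2 hv)
  exact ⟨⟨a, hav.trans v.isLt⟩, hav, adj_iff.2 ⟨Fin.ne_of_lt hav, Or.inl hrel⟩⟩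

/-- The inclusion into `C*_{s,l}` of its cycle `C_s`, which makes the graph nonbipartite when `s`
is odd. -/
def cycleHom (l : ℕ) (hsn : s ≤ n) : SimpleGraph.cycleGraph s →g Cstar n s l where
  toFun := Fin.castLE hsn
  map_rel' {i j} hij := by
    refine adj_iff.2 ⟨(Fin.castLE_injective hsn).ne hij.ne, ?_⟩
    rcases SimpleGraph.cycleGraph_adj'.1 hij with h | h
    · exact cstarRel_or_cstarRel_of_val_sub_eq_one l h
    · exact (cstarRel_or_cstarRel_of_val_sub_eq_one l h).symm

theorem not_colorable_two_of_odd (hs : Odd s) (hs1 : 1 < s) (hsn : s ≤ n) :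
    ¬ (Cstar n s l).Colorable 2 := fun h => by
  have hle := (h.of_hom (cycleHom l hsn)).chromaticNumber_le
  rw [SimpleGraph.chromaticNumber_cycleGraph_of_odd s hs1 hs] at hle
  norm_num at hle

theorem dominationNumber_three_le (hn : l + 3 ≤ n) :
    dominationNumber (Cstar n 3 l) ≤ (l + 2) / 3 + 1 := by
  let d (i : Fin ((l + 2) / 3 + 1)) : Fin n :=
    ⟨pathIndex 3 (min (3 * i) l),
      (pathIndex_lt three_pos (min_le_right _ l)).trans_le (by omega)⟩
  suffices h : ∀ v, ∃ i, d i ∈ closedNeighborSet (Cstar n 3 l) v by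
    simpa only [Fintype.card_fin] using
      dominationNumber_le_card_of_forall_exists_mem_closedNeighborSet d h
  intro v
  obtain ⟨i, hi, h⟩ := exists_pathIndex_min_three_mul_dominates l v
  exact ⟨⟨i, Nat.lt_succ_of_le hi⟩, mem_closedNeighborSet_iff.2 h⟩

theorem le_dominationNumber_three (hn : l + 3 < n) :
    (l + 2) / 3 + 1 ≤ dominationNumber (Cstar n 3 l) := by
  let p (i : Fin ((l + 2) / 3 + 1)) : Fin n := ⟨3 * i + 1, by omega⟩
  let block (v : Fin n) : Fin ((l + 2) / 3 + 1) := ⟨min (v / 3) ((l + 2) / 3), by omega⟩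
  have hp : IsPacking (Cstar n 3 l) p :=
    isPacking_of_forall_mem_closedNeighborSet_eq block fun i _ hu =>
      Fin.ext (min_div_three_eq_of_cstarRel (Nat.le_of_lt_succ i.isLt)
        (mem_closedNeighborSet_iff.1 hu))
  simpa only [Fintype.card_fin] using hp.card_le_dominationNumber

theorem dominationNumber_three (hn : l + 3 < n) :
    dominationNumber (Cstar n 3 l) = (l + 2) / 3 + 1 :=
  (dominationNumber_three_le hn.le).antisymm (le_dominationNumber_three hn)

end Cstar

theorem Cstar_attains_domination_bound_general {n l : ℕ} (hn : l + 3 < n) :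
    (Cstar n 3 l).Connected ∧ ¬ (Cstar n 3 l).Colorable 2 ∧
    dominationNumber (Cstar n 3 l) = (l + 2) / 3 + 1 :=
  have : NeZero n := ⟨by omega⟩
  ⟨Cstar.connected, Cstar.not_colorable_two_of_odd (by decide) (by decide) (by omega),
    Cstar.dominationNumber_three hn⟩

/-- For every `γ ≥ 2`, the graph `C*_{3,3γ-5}` of order `n = 3γ - 1` is connected,
nonbipartite, and has domination number `γ`; so the bound `n ≥ 3γ - 1` is attained. -/
theorem Cstar_attains_domination_bound (γ : ℕ) (hγ : 2 ≤ γ) :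
    (Cstar (3 * γ - 1) 3 (3 * γ - 5)).Connected ∧
    ¬ (Cstar (3 * γ - 1) 3 (3 * γ - 5)).Colorable 2 ∧
    dominationNumber (Cstar (3 * γ - 1) 3 (3 * γ - 5)) = γ := by
  simpa only [show (3 * γ - 5 + 2) / 3 + 1 = γ by omega] using
    Cstar_attains_domination_bound_general (show 3 * γ - 5 + 3 < 3 * γ - 1 by omega)
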